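/- arXiv:2511.03398 — 3 statements merged into one kernel-verified Lean document; each statement's English description precedes it below -/
import Mathlib

section
/- Suppose ℓ ≥ 1, η_ℓ ≠ 0, and 1 + Σ_{t=0}^{ℓ} η_t S_{t+1} = 0. For n−k−ℓ ≤ i ≤ n−k−1 set Ω_i = (Σ_{t=0}^{ℓ} η_t S_{k+t+i−n+1}) / η_ℓ. Let H be the (n−k)×n matrix over F_q whose i-th row (0 ≤ i ≤ n−k−ℓ−2) is ((u_j/v_j) α_j^i)_{j=1,…,n}, whose next ℓ rows, indexed by n−k−ℓ ≤ i ≤ n−k−1, are ((u_j/v_j)(α_j^i − Ω_i α_j^{n−k−ℓ−1}))_{j=1,…,n}, and whose last row is ((u_j/v_j) α_j^{n−k})_{j=1,…,n}. Then H has rank n−k, G·Hᵀ = 0, and consequently the row space of H equals the Euclidean dual code C⊥. -/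
/-! The rows of `H` are `(u_j / v_j) R_p(α_j)` and the rows of `G` are `v_j Q_i(α_j)` for
polynomials `Q_i`, `R_p` of degree less than `n`, so each entry of `G * Hᵀ` is a combination of the
sums `∑ j, u_j α_j ^ m`. By the classical identity `sum_uu_mul_pow`, these equal the complete
homogeneous symmetric polynomials `S_{m - n + 1}`. Orthogonality to the monomial rows of `G` then
holds because every total degree is at most `n - 2`. Against the last row of `G`, the
exponent `n - k - ℓ - 1` gives `η_ℓ`, an exponent `i` with `n - k - ℓ ≤ i ≤ n - k - 1` gives
`η_ℓ Ω_i`, and the exponent `n - k` gives `1 + ∑ η_t S_{t+1} = 0`; the subtraction of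
`Ω_i α_j ^ (n - k - ℓ - 1)` is exactly what makes the middle rows orthogonal.

Both matrices have full row rank: in each family of polynomials, every member contains a monomial,
with coefficient one, that occurs in no other member, and evaluation at `n` distinct points is
injective in degree less than `n` (`linearIndependent_eval`). The equality of the row space of `H`
with the dual code is then a dimension count. -/

open Finset Matrix

/-- Complete homogeneous symmetric polynomial of (integer) degree `t`
evaluated at `α`, with value `0` for negative `t`. -/
noncomputable def hS {F : Type*} [CommRing F] {n : ℕ} (α : Fin n → F) (t : ℤ) : F :=
  if t < 0 then 0 else ∑ f ∈ Finset.Nat.antidiagonalTuple n t.toNat, ∏ i, α i ^ f i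

/-- `u i = ∏_{j ≠ i} (α i - α j)⁻¹`. -/
noncomputable def uu {F : Type*} [Field F] {n : ℕ} (α : Fin n → F) (i : Fin n) : F :=
  ∏ j ∈ Finset.univ.erase i, (α i - α j)⁻¹

/-- The generator matrix `G` of the (+)-(L,P)-TGRS code. -/
noncomputable def Gmat {F : Type*} [Field F] {n : ℕ} (k : ℕ) {ℓ : ℕ} (α v : Fin n → F)
    (η : Fin (ℓ + 1) → F) : Matrix (Fin k) (Fin n) F :=
  Matrix.of fun i j =>
    if (i : ℕ) < k - 1 then v j * α j ^ (i : ℕ)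
    else v j * (α j ^ (k - 1) + ∑ t : Fin (ℓ + 1), η t * α j ^ (k + (t : ℕ)))

/-- The (+)-(L,P)-TGRS code: the span of the rows of `G`. -/
noncomputable def codeC {F : Type*} [Field F] {n : ℕ} (k : ℕ) {ℓ : ℕ} (α v : Fin n → F)
    (η : Fin (ℓ + 1) → F) : Submodule F (Fin n → F) :=
  Submodule.span F (Set.range (Gmat k α v η))

/-- The Euclidean dual code. -/
noncomputable def dualCode {F : Type*} [Field F] {n : ℕ} (C : Submodule F (Fin n → F)) :
    Submodule F (Fin n → F) where
  carrier := {x | ∀ c ∈ C, ∑ j, x j * c j = 0}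
  zero_mem' := by intro c hc; simp
  add_mem' := by
    intro a b ha hb c hc
    have h1 := ha c hc
    have h2 := hb c hc
    simp only [Set.mem_setOf_eq, Pi.add_apply, add_mul] at *
    rw [Finset.sum_add_distrib, h1, h2, add_zero]
  smul_mem' := by
    intro r a ha c hc
    have h1 := ha c hc
    simp only [Set.mem_setOf_eq, Pi.smul_apply, smul_eq_mul, mul_assoc] at *
    rw [← Finset.mul_sum, h1, mul_zero]
/-- Splitting off the exponent of the first variable. -/
lemma sum_antidiagonalTuple_succ {F : Type*} [CommRing F] {n : ℕ} (α : Fin (n + 1) → F) (t : ℕ) :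
    ∑ f ∈ Finset.Nat.antidiagonalTuple (n + 1) t, ∏ i, α i ^ f i =
      ∑ p ∈ Finset.HasAntidiagonal.antidiagonal t, α 0 ^ p.1 *
        ∑ f ∈ Finset.Nat.antidiagonalTuple n p.2, ∏ i, α (Fin.succ i) ^ f i := by
  simp only [Finset.mul_sum]
  rw [Finset.sum_sigma']
  refine Finset.sum_bij' (fun f _ => ⟨(f 0, ∑ i : Fin n, f i.succ), fun i => f i.succ⟩)
    (fun x _ => Fin.cons x.1.1 x.2) ?_ ?_ ?_ ?_ ?_
  · intro f hf
    rw [Finset.Nat.mem_antidiagonalTuple, Fin.sum_univ_succ] at hf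
    simp [Finset.Nat.mem_antidiagonalTuple, hf]
  · rintro ⟨⟨a, b⟩, f⟩ hx
    simp only [Finset.mem_sigma, Finset.HasAntidiagonal.mem_antidiagonal, Finset.Nat.mem_antidiagonalTuple] at hx
    simp [Finset.Nat.mem_antidiagonalTuple, Fin.sum_univ_succ, hx.1, hx.2]
  · intro f hf
    ext i
    refine Fin.cases ?_ (fun i => ?_) i <;> simp
  · rintro ⟨⟨a, b⟩, f⟩ hx
    simp only [Finset.mem_sigma, Finset.HasAntidiagonal.mem_antidiagonal, Finset.Nat.mem_antidiagonalTuple] at hx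
    obtain ⟨h1, rfl⟩ := hx
    simp
  · intro f hf
    simp [Fin.prod_univ_succ]

lemma hS_neg {F : Type*} [CommRing F] {n : ℕ} (α : Fin n → F) {t : ℤ} (ht : t < 0) :
    hS α t = 0 := by
  simp [hS, ht]

lemma hS_zero {F : Type*} [CommRing F] {n : ℕ} (α : Fin n → F) : hS α 0 = 1 := by
  simp [hS, Finset.Nat.antidiagonalTuple_zero_right]

lemma hS_natCast {F : Type*} [CommRing F] {n : ℕ} (α : Fin n → F) (t : ℕ) :
    hS α (t : ℤ) = ∑ f ∈ Finset.Nat.antidiagonalTuple n t, ∏ i, α i ^ f i := by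
  simp [hS]

/-- The recursion `h_t(x₀, x) = x₀ h_{t-1}(x₀, x) + h_t(x)`, valid in every integer degree. -/
lemma hS_succ {F : Type*} [CommRing F] {n : ℕ} (α : Fin (n + 1) → F) (t : ℤ) :
    hS α t = α 0 * hS α (t - 1) + hS (fun i => α (Fin.succ i)) t := by
  rcases lt_trichotomy t 0 with h | rfl | h
  · rw [hS_neg _ h, hS_neg _ h, hS_neg _ (by lia)]; simp
  · rw [hS_zero, hS_zero, hS_neg _ (by lia)]; simp
  · obtain ⟨s, rfl⟩ : ∃ s : ℕ, t = ((s + 1 : ℕ) : ℤ) := ⟨(t - 1).toNat, by lia⟩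
    have h1 : (((s + 1 : ℕ) : ℤ) - 1) = (s : ℤ) := by push_cast; ring
    rw [h1, hS_natCast α, hS_natCast α, hS_natCast, sum_antidiagonalTuple_succ,
      sum_antidiagonalTuple_succ, Finset.Nat.sum_antidiagonal_succ, add_comm]
    congr 1
    · rw [Finset.mul_sum]
      refine Finset.sum_congr rfl fun p _ => ?_
      rw [pow_succ']
      exact mul_assoc _ _ _
    · simp

lemma uu_succ {F : Type*} [Field F] {n : ℕ} (α : Fin (n + 1) → F) (j : Fin n) :
    uu α j.succ = (α j.succ - α 0)⁻¹ * uu (fun i => α (Fin.succ i)) j := by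
  have key : ∀ {m : ℕ} (β : Fin m → F) (i : Fin m),
      uu β i = ∏ j, if j = i then 1 else (β i - β j)⁻¹ := by
    intro m β i
    rw [uu, ← Finset.mul_prod_erase Finset.univ _ (Finset.mem_univ i)]
    simp only [if_true, one_mul]
    refine Finset.prod_congr rfl fun j hj => ?_
    rw [if_neg (Finset.ne_of_mem_erase hj)]
  rw [key, key, Fin.prod_univ_succ, if_neg (Fin.succ_ne_zero j).symm]
  simp

/-- Leading coefficient of the interpolant of the constant `1`. -/
lemma sum_uu {F : Type*} [Field F] {n : ℕ} (α : Fin (n + 1) → F) (hα : Function.Injective α) :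
    ∑ j, uu α j = if n = 0 then 1 else 0 := by
  have h := Lagrange.coeff_eq_sum (s := Finset.univ) (v := α) hα.injOn
    (P := (1 : Polynomial F)) (by
      rw [Polynomial.degree_one, Finset.card_univ, Fintype.card_fin]; exact_mod_cast Nat.succ_pos n)
  simp only [Finset.card_univ, Fintype.card_fin, Nat.add_sub_cancel, Polynomial.coeff_one,
    Polynomial.eval_one, one_div] at h
  rw [h]
  exact Finset.sum_congr rfl fun j _ => by rw [uu, Finset.prod_inv_distrib]

/-- The classical identity `∑ j, u_j α_j ^ m = S_{m - n + 1}`. Both sides satisfy the recursion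
`D_{n+1}(m+1) = α_0 D_{n+1}(m) + D_n(m)`. -/
lemma sum_uu_mul_pow {F : Type*} [Field F] {n : ℕ} (α : Fin n → F) (hα : Function.Injective α)
    (m : ℕ) : ∑ j, uu α j * α j ^ m = hS α ((m : ℤ) - (n : ℤ) + 1) := by
  induction m generalizing n with
  | zero =>
    cases n with
    | zero => simp [hS]
    | succ n =>
      simp only [pow_zero, mul_one]
      rw [sum_uu α hα]
      split_ifs with h
      · subst h; simp [hS_zero]
      · rw [hS_neg]; lia
  | succ m ih =>
    cases n with
    | zero =>
      have h : ((m + 1 : ℕ) : ℤ) - ((0 : ℕ) : ℤ) + 1 = ((m + 1 + 1 : ℕ) : ℤ) := by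
        push_cast; ring
      rw [h, hS_natCast]
      simp
    | succ n =>
      have hrec : ∑ j, uu α j * α j ^ (m + 1) = α 0 * ∑ j, uu α j * α j ^ m +
          ∑ j : Fin n, uu (fun i => α (Fin.succ i)) j * α j.succ ^ m := by
        rw [Fin.sum_univ_succ, Fin.sum_univ_succ, mul_add, Finset.mul_sum, add_assoc,
          ← Finset.sum_add_distrib]
        congr 1
        · ring
        · refine Finset.sum_congr rfl fun j _ => ?_
          have hne : α j.succ - α 0 ≠ 0 :=
            sub_ne_zero.mpr fun h => Fin.succ_ne_zero j (hα h)
          rw [uu_succ]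
          field_simp
          ring
      rw [hrec, ih α hα, ih (fun i => α (Fin.succ i)) (hα.comp (Fin.succ_injective n)),
        hS_succ α (((m + 1 : ℕ) : ℤ) - _ + 1)]
      congr 3 <;> push_cast <;> ring

open Polynomial in
/-- Evaluation vectors of polynomials of degree less than `n`, each containing a private monomial
`X ^ e q` with coefficient one, are linearly independent. -/
lemma linearIndependent_eval {F : Type*} [Field F] {n r : ℕ} (α w : Fin n → F)
    (hα : Function.Injective α) (hw : ∀ j, w j ≠ 0) (P : Fin r → F[X]) (e : Fin r → ℕ)
    (hdeg : ∀ p, (P p).degree < n)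
    (hcoeff : ∀ p q, (P p).coeff (e q) = if p = q then 1 else 0)
    (A : Fin r → Fin n → F) (hA : ∀ p j, A p j = w j * (P p).eval (α j)) :
    LinearIndependent F A := by
  obtain rfl : A = fun p j => w j * (P p).eval (α j) := funext₂ hA
  rw [Fintype.linearIndependent_iff]
  intro g hg q
  have hzero : ∑ p, C (g p) * P p = 0 := by
    refine eq_zero_of_degree_lt_of_eval_index_eq_zero (s := Finset.univ) (v := α) hα.injOn ?_ ?_
    · rw [Finset.card_univ, Fintype.card_fin]
      rw [← mem_degreeLT]
      refine Submodule.sum_mem _ fun p _ => ?_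
      rw [← smul_eq_C_mul]
      exact Submodule.smul_mem _ _ (mem_degreeLT.mpr (hdeg p))
    · intro j _
      have h := congrFun hg j
      simp only [Finset.sum_apply, Pi.smul_apply, smul_eq_mul, Pi.zero_apply] at h
      rw [eval_finsetSum]
      refine (mul_eq_zero.mp ?_).resolve_left (hw j)
      rw [Finset.mul_sum, ← h]
      refine Finset.sum_congr rfl fun p _ => ?_
      rw [eval_mul, eval_C]
      ring
  have h := congrArg (fun Q => Q.coeff (e q)) hzero
  simpa [finsetSum_coeff, hcoeff] using h

open Polynomial in
lemma linearIndependent_Gmat {F : Type*} [Field F] {n k ℓ : ℕ} (hk2 : 2 ≤ k)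
    (hℓ : k + ℓ + 1 ≤ n) (α v : Fin n → F) (hα : Function.Injective α) (hv : ∀ j, v j ≠ 0)
    (η : Fin (ℓ + 1) → F) : LinearIndependent F (Gmat k α v η) := by
  let T : F[X] := ∑ t : Fin (ℓ + 1), C (η t) * X ^ (k + (t : ℕ))
  refine linearIndependent_eval (r := k) α v hα hv
    (fun i => X ^ (i : ℕ) + if (i : ℕ) < k - 1 then 0 else T) (fun i => (i : ℕ)) ?_ ?_ _ ?_
  · intro i
    rw [← mem_degreeLT]
    refine Submodule.add_mem _ ?_ ?_
    · rw [mem_degreeLT, degree_X_pow]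
      have := i.2
      exact_mod_cast (by lia : (i : ℕ) < n)
    · split_ifs
      · exact Submodule.zero_mem _
      · refine Submodule.sum_mem _ fun t _ => ?_
        rw [mem_degreeLT]
        refine (degree_C_mul_X_pow_le _ _).trans_lt ?_
        have := t.2
        exact_mod_cast (by lia : k + (t : ℕ) < n)
  · intro p q
    have hT : T.coeff (q : ℕ) = 0 := by
      simp only [T, finsetSum_coeff, coeff_C_mul, coeff_X_pow]
      refine Finset.sum_eq_zero fun t _ => ?_
      have := q.2
      rw [if_neg (by lia), mul_zero]
    have hpq : ((q : ℕ) = (p : ℕ)) ↔ p = q := by rw [Fin.ext_iff, eq_comm]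
    rw [coeff_add, coeff_X_pow]
    split_ifs <;> simp_all
  · intro i j
    simp only [Gmat, Matrix.of_apply]
    split_ifs with hi
    · simp
    · have : (i : ℕ) = k - 1 := by have := i.2; lia
      simp [this, T, eval_finsetSum]

lemma rank_of_linearIndependent {F : Type*} [Field F] {m n : ℕ} (A : Matrix (Fin m) (Fin n) F)
    (h : LinearIndependent F A) : A.rank = m := by
  rw [Matrix.rank_eq_finrank_span_row]
  exact (finrank_span_eq_card h).trans (Fintype.card_fin m)

/-- The dual of a row space is the kernel of `A`. -/
lemma dualCode_span_range {F : Type*} [Field F] {m n : ℕ} (A : Matrix (Fin m) (Fin n) F) :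
    dualCode (Submodule.span F (Set.range A)) = LinearMap.ker A.mulVecLin := by
  ext x
  rw [LinearMap.mem_ker, Matrix.mulVecLin_apply]
  change (∀ c ∈ Submodule.span F (Set.range A), ∑ j, x j * c j = 0) ↔ _
  constructor
  · intro h
    funext i
    have := h (A i) (Submodule.subset_span ⟨i, rfl⟩)
    simpa [Matrix.mulVec, dotProduct, mul_comm] using this
  · intro h c hc
    induction hc using Submodule.span_induction with
    | mem c hc =>
      obtain ⟨i, rfl⟩ := hc
      have := congrFun h i
      simpa [Matrix.mulVec, dotProduct, mul_comm] using this
    | zero => simp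
    | add a b _ _ ha hb => simp [mul_add, Finset.sum_add_distrib, ha, hb]
    | smul r a _ ha =>
      have : ∑ j, x j * (r • a) j = r * ∑ j, x j * a j := by
        rw [Finset.mul_sum]
        exact Finset.sum_congr rfl fun j _ => by simp; ring
      rw [this, ha, mul_zero]

lemma span_range_eq_dualCode {F : Type*} [Field F] {n k : ℕ} (hkn : k ≤ n)
    (A : Matrix (Fin k) (Fin n) F) (B : Matrix (Fin (n - k)) (Fin n) F)
    (hA : A.rank = k) (hB : B.rank = n - k) (hAB : A * B.transpose = 0) :
    Submodule.span F (Set.range B) = dualCode (Submodule.span F (Set.range A)) := by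
  rw [dualCode_span_range]
  refine Submodule.eq_of_le_of_finrank_eq ?_ ?_
  · rw [Submodule.span_le]
    rintro _ ⟨p, rfl⟩
    rw [SetLike.mem_coe, LinearMap.mem_ker, Matrix.mulVecLin_apply]
    funext i
    exact congrFun (congrFun hAB i) p
  · have h1 := A.mulVecLin.finrank_range_add_finrank_ker
    have h2 : Module.finrank F (LinearMap.range A.mulVecLin) = k := hA
    rw [Module.finrank_fin_fun, h2] at h1
    have h3 := Matrix.rank_eq_finrank_span_row B
    rw [hB] at h3
    exact h3.symm.trans (by lia)

/-- Pairing a monomial row of `G` with an exponent `m ≤ n - k`: the total degree is at most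
`n - 2`. -/
lemma Gmat_pairing_low {F : Type*} [Field F] {n k ℓ : ℕ} (hkn : k ≤ n)
    (α v : Fin n → F) (hα : Function.Injective α) (hv : ∀ j, v j ≠ 0)
    (η : Fin (ℓ + 1) → F) (i : Fin k) (hi : (i : ℕ) < k - 1) (m : ℕ) (hm : m ≤ n - k) :
    ∑ j, Gmat k α v η i j * (uu α j / v j * α j ^ m) = 0 := by
  rw [← hS_neg α (t := ((i + m : ℕ) : ℤ) - n + 1) (by push_cast; lia), ← sum_uu_mul_pow α hα]
  refine Finset.sum_congr rfl fun j _ => ?_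
  have := hv j
  simp only [Gmat, Matrix.of_apply, if_pos hi]
  field_simp
  ring

lemma Gmat_pairing_last {F : Type*} [Field F] {n k ℓ : ℕ} (hk2 : 2 ≤ k)
    (α v : Fin n → F) (hα : Function.Injective α) (hv : ∀ j, v j ≠ 0)
    (η : Fin (ℓ + 1) → F) (i : Fin k) (hi : ¬ (i : ℕ) < k - 1) (m : ℕ) :
    ∑ j, Gmat k α v η i j * (uu α j / v j * α j ^ m) =
      hS α ((k : ℤ) + m - n) +
        ∑ t : Fin (ℓ + 1), η t * hS α ((k : ℤ) + ((t : ℕ) : ℤ) + (m : ℤ) - (n : ℤ) + 1) := by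
  have h1 : (k : ℤ) + m - n = ((k - 1 + m : ℕ) : ℤ) - n + 1 := by lia
  have h2 : ∀ t : ℕ, (k : ℤ) + (t : ℤ) + (m : ℤ) - (n : ℤ) + 1 =
      ((k + t + m : ℕ) : ℤ) - n + 1 := by intro t; push_cast; ring
  simp only [h1, h2, ← sum_uu_mul_pow α hα, Finset.mul_sum]
  rw [Finset.sum_comm, ← Finset.sum_add_distrib]
  refine Finset.sum_congr rfl fun j _ => ?_
  have := hv j
  simp only [Gmat, Matrix.of_apply, if_neg hi]
  have h3 : ∑ t : Fin (ℓ + 1), η t * (uu α j * α j ^ (k + (t : ℕ) + m)) =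
      uu α j * α j ^ m * ∑ t : Fin (ℓ + 1), η t * α j ^ (k + (t : ℕ)) := by
    rw [Finset.mul_sum]
    exact Finset.sum_congr rfl fun t _ => by ring
  rw [h3]
  field_simp
  ring

theorem stmt1 {F : Type*} [Field F] {n k ℓ : ℕ}
    (hk2 : 2 ≤ k) (hkn : k ≤ n) (hℓ : k + ℓ + 1 ≤ n) (hℓ1 : 1 ≤ ℓ)
    (α v : Fin n → F) (hα : Function.Injective α) (hv : ∀ j, v j ≠ 0)
    (η : Fin (ℓ + 1) → F) (hη : η ≠ 0) (hηℓ : η (Fin.last ℓ) ≠ 0)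
    (hden : 1 + ∑ t : Fin (ℓ + 1), η t * hS α (((t : ℕ) : ℤ) + 1) = 0)
    (Ω : ℕ → F)
    (hΩ : ∀ i : ℕ, Ω i =
      (∑ t : Fin (ℓ + 1), η t * hS α ((k : ℤ) + ((t : ℕ) : ℤ) + (i : ℤ) - (n : ℤ) + 1)) /
        η (Fin.last ℓ))
    (H : Matrix (Fin (n - k)) (Fin n) F)
    (hH : ∀ (p : Fin (n - k)) (j : Fin n),
      H p j = if (p : ℕ) < n - k - ℓ - 1 then uu α j / v j * α j ^ (p : ℕ)
        else if (p : ℕ) < n - k - 1 then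
          uu α j / v j * (α j ^ ((p : ℕ) + 1) - Ω ((p : ℕ) + 1) * α j ^ (n - k - ℓ - 1))
        else uu α j / v j * α j ^ (n - k)) :
    H.rank = n - k ∧ Gmat k α v η * H.transpose = 0 ∧
      Submodule.span F (Set.range H) = dualCode (codeC k α v η) := by
  have hu : ∀ j, uu α j ≠ 0 := fun j => Finset.prod_ne_zero_iff.mpr fun i hi =>
    inv_ne_zero (sub_ne_zero.mpr fun h => Finset.ne_of_mem_erase hi (hα h).symm)
  have hHind : LinearIndependent F H := by
    -- The private monomial of row `p` skips the exponent `n - k - ℓ - 1`.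
    let e : Fin (n - k) → ℕ := fun p => if (p : ℕ) < n - k - ℓ - 1 then (p : ℕ) else (p : ℕ) + 1
    let c : Fin (n - k) → F := fun p =>
      if (p : ℕ) < n - k - ℓ - 1 then 0 else if (p : ℕ) < n - k - 1 then Ω ((p : ℕ) + 1) else 0
    refine linearIndependent_eval (r := n - k) α (fun j => uu α j / v j) hα
      (fun j => div_ne_zero (hu j) (hv j))
      (fun p => Polynomial.X ^ e p - Polynomial.C (c p) * Polynomial.X ^ (n - k - ℓ - 1)) e ?_ ?_ H ?_
    · intro p
      rw [← Polynomial.mem_degreeLT]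
      have := p.2
      refine Submodule.sub_mem _ ?_ ?_
      · rw [Polynomial.mem_degreeLT, Polynomial.degree_X_pow]
        have : e p < n := by simp only [e]; split_ifs <;> lia
        exact_mod_cast this
      · rw [Polynomial.mem_degreeLT]
        refine (Polynomial.degree_C_mul_X_pow_le _ _).trans_lt ?_
        exact_mod_cast (by lia : n - k - ℓ - 1 < n)
    · intro p q
      have h1 : e q ≠ n - k - ℓ - 1 := by simp only [e]; split_ifs <;> lia
      have h2 : e q = e p ↔ p = q := by
        rw [Fin.ext_iff]; simp only [e]; split_ifs <;> lia
      simp [Polynomial.coeff_X_pow, h1, h2]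
    · intro p j
      rw [hH]
      simp only [e, c]
      have := p.2
      split_ifs with h1 h2
      · simp
      · simp
      · have : (p : ℕ) + 1 = n - k := by lia
        simp [this]
  have hGind := linearIndependent_Gmat hk2 hℓ α v hα hv η
  have hGH : Gmat k α v η * H.transpose = 0 := by
    ext i p
    rw [Matrix.mul_apply, Matrix.zero_apply]
    simp only [Matrix.transpose_apply, hH]
    have hp := p.2
    have hsplit : ∀ j, Gmat k α v η i j * (uu α j / v j * (α j ^ ((p : ℕ) + 1) -
        Ω ((p : ℕ) + 1) * α j ^ (n - k - ℓ - 1))) =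
        Gmat k α v η i j * (uu α j / v j * α j ^ ((p : ℕ) + 1)) - Ω ((p : ℕ) + 1) *
          (Gmat k α v η i j * (uu α j / v j * α j ^ (n - k - ℓ - 1))) := fun j => by ring
    by_cases hi : (i : ℕ) < k - 1
    · have low := Gmat_pairing_low hkn α v hα hv η i hi
      split_ifs with h1 h2
      · exact low _ (by lia)
      · have a1 := low ((p : ℕ) + 1) (by lia)
        have a2 := low (n - k - ℓ - 1) (by lia)
        simp only [hsplit, Finset.sum_sub_distrib, ← Finset.mul_sum]
        rw [a1, a2, mul_zero, sub_zero]
      · exact low _ le_rfl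
    · have last := Gmat_pairing_last hk2 α v hα hv η i hi
      split_ifs with h1 h2
      · rw [last, hS_neg _ (by lia), zero_add]
        refine Finset.sum_eq_zero fun t _ => ?_
        have := t.2
        rw [hS_neg _ (by lia), mul_zero]
      · have a1 := last ((p : ℕ) + 1)
        have a2 := last (n - k - ℓ - 1)
        have b1 : ∑ t : Fin (ℓ + 1), η t * hS α ((k : ℤ) + ((t : ℕ) : ℤ) +
            (((p : ℕ) + 1 : ℕ) : ℤ) - (n : ℤ) + 1) = Ω ((p : ℕ) + 1) * η (Fin.last ℓ) := by
          rw [hΩ, div_mul_cancel₀ _ hηℓ]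
        have b2 : ∑ t : Fin (ℓ + 1), η t * hS α ((k : ℤ) + ((t : ℕ) : ℤ) +
            ((n - k - ℓ - 1 : ℕ) : ℤ) - (n : ℤ) + 1) = η (Fin.last ℓ) := by
          -- Only `t = ℓ` survives; its symmetric polynomial has degree `0`.
          rw [Fin.sum_univ_castSucc, Finset.sum_eq_zero, zero_add]
          · have : (k : ℤ) + ((Fin.last ℓ : ℕ) : ℤ) +
                ((n - k - ℓ - 1 : ℕ) : ℤ) - (n : ℤ) + 1 = 0 := by
              rw [Fin.val_last]; lia
            rw [this, hS_zero, mul_one]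
          · intro t _
            have := t.2
            rw [hS_neg _ (by rw [Fin.val_castSucc]; lia), mul_zero]
        rw [hS_neg _ (by lia), zero_add, b1] at a1
        rw [hS_neg _ (by lia), zero_add, b2] at a2
        simp only [hsplit, Finset.sum_sub_distrib, ← Finset.mul_sum]
        rw [a1, a2, sub_self]
      · rw [last, ← hden]
        have c1 : (k : ℤ) + ((n - k : ℕ) : ℤ) - n = 0 := by lia
        rw [c1, hS_zero]
        congr 1
        refine Finset.sum_congr rfl fun t _ => ?_
        congr 2
        lia
  have hHr := rank_of_linearIndependent H hHind
  exact ⟨hHr, hGH,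
    span_range_eq_dualCode hkn _ H (rank_of_linearIndependent _ hGind) hHr hGH⟩
end

section
/- Take v_1 = ⋯ = v_n = 1. Suppose 2k > n ≥ k + ℓ + 2, ℓ ≥ 1, η_ℓ ≠ 0, and 1 + Σ_{t=0}^{ℓ} η_t S_{t+1} = 0. Then the Schur square of the dual code satisfies dim_{F_q}(C⊥ ⋆ C⊥) ≥ 2n − 2k. -/
/-!
Put `N = n - k` and `d = N - ℓ - 1`. For `u_j = ∏_{i ≠ j} (α_j - α_i)⁻¹` and a polynomial `p`, write
`L(p) = ∑_j u_j p(α_j)`; by Lagrange interpolation `L(p)` is the coefficient of `X^(n-1)` in `p`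
when `deg p < n` (`weightedSum_eq_coeff`). Hence a word `(u_j p(α_j))_j` with `deg p ≤ N` is
orthogonal to the first `k - 1` rows of `G` automatically, and it lies in the dual code once
`Φ(p) = L(p Q) = 0`, where `Q = X^(k-1) + ∑_t η_t X^(k+t)` is the polynomial of the last row.

The least `m` with `Φ(X^m) ≠ 0` is `d`, because `Φ(X^d) = η_ℓ`. Subtracting a multiple of `X^d`
from `X^m` therefore gives a monic `p` of degree `m` in the kernel of `Φ` for each `m ≤ N`,
`m ≠ d` (`exists_monic_dual`). As `1 ≤ d ≤ N - 2`, every `s ≤ 2N` except possibly `s = 1` is a sum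
of two such degrees (`exists_add_ne`), so the Schur square contains `(u_j² p(α_j))_j` for monic `p`
of each of these `2N` degrees. Since `2N < n`, evaluation at the `α_j` is injective on polynomials
of degree at most `2N`, and the `2N` words are linearly independent.
-/


open Finset Matrix

/-- The Schur (coordinatewise) product of two linear codes. -/
noncomputable def schurMul {F : Type*} [Field F] {n : ℕ}
    (C₁ C₂ : Submodule F (Fin n → F)) : Submodule F (Fin n → F) :=
  Submodule.span F {x | ∃ c₁ ∈ C₁, ∃ c₂ ∈ C₂, x = fun j => c₁ j * c₂ j}

open Polynomial in
/-- The Lagrange functional: `∑ u_j p(α_j)` is the coefficient of `X ^ (n - 1)`. -/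
lemma weightedSum_eq_coeff {F : Type*} [Field F] {n : ℕ} {α : Fin n → F}
    (hα : Function.Injective α) {p : F[X]} (hp : p.degree < n) :
    ∑ j, uu α j * p.eval (α j) = p.coeff (n - 1) := by
  have h := Lagrange.coeff_eq_sum (s := (Finset.univ : Finset (Fin n))) (v := α)
    hα.injOn (P := p) (by simpa using hp)
  rw [Finset.card_univ, Fintype.card_fin] at h
  rw [h]
  refine Finset.sum_congr rfl fun j _ => ?_
  rw [uu, Finset.prod_inv_distrib, div_eq_mul_inv, mul_comm]

lemma uu_ne_zero {F : Type*} [Field F] {n : ℕ} {α : Fin n → F}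
    (hα : Function.Injective α) (j : Fin n) : uu α j ≠ 0 := by
  rw [uu, Finset.prod_ne_zero_iff]
  intro i hi
  exact inv_ne_zero (sub_ne_zero.2 fun h => (Finset.ne_of_mem_erase hi) (hα h).symm)

open Polynomial in
/-- The polynomial `X^(k-1) + ∑ η_t X^(k+t)` whose values form the last row of the generator
matrix. -/
noncomputable def twistPoly {F : Type*} [Field F] (k : ℕ) {ℓ : ℕ} (η : Fin (ℓ + 1) → F) : F[X] :=
  X ^ (k - 1) + ∑ t : Fin (ℓ + 1), C (η t) * X ^ (k + (t : ℕ))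

open Polynomial in
lemma eval_twistPoly {F : Type*} [Field F] (k : ℕ) {ℓ : ℕ} (η : Fin (ℓ + 1) → F) (x : F) :
    (twistPoly k η).eval x = x ^ (k - 1) + ∑ t : Fin (ℓ + 1), η t * x ^ (k + (t : ℕ)) := by
  simp [twistPoly, eval_finsetSum]

open Polynomial in
lemma natDegree_twistPoly_le {F : Type*} [Field F] (k : ℕ) {ℓ : ℕ} (η : Fin (ℓ + 1) → F) :
    (twistPoly k η).natDegree ≤ k + ℓ := by
  refine natDegree_add_le_of_degree_le ((natDegree_X_pow_le _).trans (by omega)) ?_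
  refine natDegree_sum_le_of_forall_le _ _ fun t _ => ?_
  exact (natDegree_C_mul_X_pow_le _ _).trans (by omega)

open Polynomial in
lemma coeff_twistPoly {F : Type*} [Field F] {k : ℕ} (hk : 2 ≤ k) {ℓ : ℕ} (η : Fin (ℓ + 1) → F) :
    (twistPoly k η).coeff (k + ℓ) = η (Fin.last ℓ) := by
  rw [twistPoly, coeff_add, coeff_X_pow, if_neg (by omega), zero_add, finsetSum_coeff,
    Finset.sum_eq_single (Fin.last ℓ)]
  · simp
  · intro t _ ht
    rw [coeff_C_mul_X_pow, if_neg]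
    intro h
    exact ht (Fin.ext (by simp; omega))
  · simp

open Polynomial in
/-- A word `(u_j p(α_j))_j` with `deg p ≤ n - k` is in the dual code as soon as it is orthogonal to
the last row of the generator matrix. -/
lemma mem_dualCode_of_weightedSum {F : Type*} [Field F] {n k ℓ : ℕ} (hk2 : 2 ≤ k) (hkn : k ≤ n)
    {α : Fin n → F} (hα : Function.Injective α) (η : Fin (ℓ + 1) → F) {p : F[X]}
    (hp : p.natDegree ≤ n - k)
    (hΦ : ∑ j, uu α j * (p * twistPoly k η).eval (α j) = 0) :
    (fun j => uu α j * p.eval (α j)) ∈ dualCode (codeC k α (fun _ => 1) η) := by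
  change ∀ c ∈ codeC k α (fun _ => 1) η, ∑ j, (uu α j * p.eval (α j)) * c j = 0
  intro c hc
  rw [codeC] at hc
  induction hc using Submodule.span_induction with
  | mem c hc =>
    obtain ⟨i, rfl⟩ := hc
    by_cases hi : (i : ℕ) < k - 1
    · have hdeg : (p * X ^ (i : ℕ)).natDegree < n - 1 := by
        refine lt_of_le_of_lt natDegree_mul_le ?_
        rw [natDegree_X_pow]
        omega
      have h := weightedSum_eq_coeff hα (p := p * X ^ (i : ℕ))
        (lt_of_le_of_lt degree_le_natDegree (by exact_mod_cast by omega))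
      rw [coeff_eq_zero_of_natDegree_lt hdeg] at h
      rw [← h]
      refine Finset.sum_congr rfl fun j _ => ?_
      simp [Gmat, hi, mul_assoc]
    · rw [← hΦ]
      refine Finset.sum_congr rfl fun j _ => ?_
      simp [Gmat, hi, mul_assoc, eval_twistPoly]
  | zero => simp
  | add x y _ _ hx hy => simp [mul_add, Finset.sum_add_distrib, hx, hy]
  | smul r x _ hx =>
    have : ∀ j, uu α j * p.eval (α j) * (r • x) j = r * (uu α j * p.eval (α j) * x j) := by
      intro j
      simp only [Pi.smul_apply, smul_eq_mul]
      ring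
    simp only [this, ← Finset.mul_sum, hx, mul_zero]

open Polynomial in
/-- The dual code contains words coming from monic polynomials of every degree `m ≤ n - k` other
than `n - k - ℓ - 1`. -/
lemma exists_monic_dual {F : Type*} [Field F] {n k ℓ : ℕ} (hk2 : 2 ≤ k)
    (hn : k + ℓ + 2 ≤ n) {α : Fin n → F} (hα : Function.Injective α)
    (η : Fin (ℓ + 1) → F) (hηℓ : η (Fin.last ℓ) ≠ 0)
    {m : ℕ} (hm : m ≤ n - k) (hmd : m ≠ n - k - ℓ - 1) :
    ∃ p : F[X], p.Monic ∧ p.natDegree = m ∧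
      (fun j => uu α j * p.eval (α j)) ∈ dualCode (codeC k α (fun _ => 1) η) := by
  set d := n - k - ℓ - 1 with hd
  set Φ : F[X] → F := fun p => ∑ j, uu α j * (p * twistPoly k η).eval (α j) with hΦ
  have hQ := natDegree_twistPoly_le k η
  have hΦX : ∀ i ≤ d, Φ (X ^ i) = (twistPoly k η).coeff (n - 1 - i) := by
    intro i hi
    have hdeg : (X ^ i * twistPoly k η).natDegree < n := by
      refine lt_of_le_of_lt natDegree_mul_le ?_
      rw [natDegree_X_pow]
      omega
    simp only [hΦ]
    rw [weightedSum_eq_coeff hα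
      (lt_of_le_of_lt degree_le_natDegree (by exact_mod_cast hdeg)), coeff_X_pow_mul',
      if_pos (by omega)]
  have hΦd : Φ (X ^ d) = η (Fin.last ℓ) := by
    rw [hΦX d le_rfl, ← coeff_twistPoly hk2 η]
    congr 1
    omega
  rcases lt_or_gt_of_ne hmd with h | h
  · refine ⟨X ^ m, monic_X_pow m, natDegree_X_pow m, ?_⟩
    refine mem_dualCode_of_weightedSum hk2 (by omega) hα η (by simpa using hm) ?_
    change Φ (X ^ m) = 0
    rw [hΦX m h.le]
    exact coeff_eq_zero_of_natDegree_lt (by omega)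
  · set c := Φ (X ^ m) / Φ (X ^ d) with hc
    have hlt : (C c * X ^ d : F[X]).degree < (m : ℕ) :=
      lt_of_le_of_lt (degree_C_mul_X_pow_le _ _) (by exact_mod_cast h)
    have hnd : (X ^ m - C c * X ^ d).natDegree = m := by
      apply natDegree_eq_of_degree_eq_some
      rw [degree_sub_eq_left_of_degree_lt (by rwa [degree_X_pow]), degree_X_pow]
    refine ⟨X ^ m - C c * X ^ d, ?_, hnd, ?_⟩
    · exact monic_X_pow_sub (by simpa using hlt)
    · refine mem_dualCode_of_weightedSum hk2 (by omega) hα η (by omega) ?_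
      have hlin : Φ (X ^ m - C c * X ^ d) = Φ (X ^ m) - c * Φ (X ^ d) := by
        simp only [hΦ, Finset.mul_sum, ← Finset.sum_sub_distrib]
        refine Finset.sum_congr rfl fun j _ => ?_
        simp only [eval_mul, eval_sub, eval_C]
        ring
      change Φ (X ^ m - C c * X ^ d) = 0
      rw [hlin, hc, div_mul_cancel₀ _ (by rwa [hΦd]), sub_self]

/-- The sumset of `{0, …, N} \ {d}` with itself contains `{0, …, 2N} \ {1}`. -/
lemma exists_add_ne {N d s : ℕ} (hd1 : 1 ≤ d) (hdN : d + 2 ≤ N) (hs : s ≤ 2 * N) (hs1 : s ≠ 1) :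
    ∃ a b, a ≤ N ∧ b ≤ N ∧ a ≠ d ∧ b ≠ d ∧ a + b = s := by
  by_cases h1 : s = d
  · exact ⟨1, d - 1, by omega, by omega, by omega, by omega, by omega⟩
  by_cases h2 : s ≤ N
  · exact ⟨0, s, by omega, by omega, by omega, by omega, by omega⟩
  by_cases h3 : s = N + d
  · exact ⟨N - 1, d + 1, by omega, by omega, by omega, by omega, by omega⟩
  · exact ⟨N, s - N, by omega, by omega, by omega, by omega, by omega⟩

open Polynomial in
theorem stmt10 {F : Type*} [Field F] {n k ℓ : ℕ}
    (hk2 : 2 ≤ k) (hkn : k ≤ n)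
    (h2k : 2 * k > n) (hn : k + ℓ + 2 ≤ n) (hℓ1 : 1 ≤ ℓ)
    (α : Fin n → F) (hα : Function.Injective α)
    (η : Fin (ℓ + 1) → F) (hη : η ≠ 0) (hηℓ : η (Fin.last ℓ) ≠ 0)
    (hden : 1 + ∑ t : Fin (ℓ + 1), η t * hS α (((t : ℕ) : ℤ) + 1) = 0) :
    2 * n - 2 * k ≤ Module.finrank F
      (schurMul (dualCode (codeC k α (fun _ => 1) η))
        (dualCode (codeC k α (fun _ => 1) η))) := by
  set W := schurMul (dualCode (codeC k α (fun _ => 1) η))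
    (dualCode (codeC k α (fun _ => 1) η)) with hW
  let E : F[X] →ₗ[F] (Fin n → F) :=
    { toFun := fun p j => uu α j ^ 2 * p.eval (α j)
      map_add' := by intro p q; ext j; simp [mul_add]
      map_smul' := by intro r p; ext j; simp; ring }
  have hE : ∀ p j, E p j = uu α j ^ 2 * p.eval (α j) := fun _ _ => rfl
  have key : ∀ s : ℕ, ∃ p : F[X], p.degree = s ∧ (s ≤ 2 * (n - k) → s ≠ 1 → E p ∈ W) := by
    intro s
    by_cases hs : s ≤ 2 * (n - k) ∧ s ≠ 1
    · obtain ⟨a, b, ha, hb, had, hbd, rfl⟩ :=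
        exists_add_ne (d := n - k - ℓ - 1) (by omega) (by omega) hs.1 hs.2
      obtain ⟨p, hp, hpd, hpm⟩ := exists_monic_dual hk2 hn hα η hηℓ ha had
      obtain ⟨q, hq, hqd, hqm⟩ := exists_monic_dual hk2 hn hα η hηℓ hb hbd
      refine ⟨p * q, ?_, fun _ _ => ?_⟩
      · rw [degree_eq_natDegree (hp.mul hq).ne_zero, hp.natDegree_mul hq, hpd, hqd]
      · refine Submodule.subset_span ⟨_, hpm, _, hqm, ?_⟩
        ext j
        rw [hE, eval_mul]
        ring
    · exact ⟨X ^ s, degree_X_pow s, fun h h' => absurd ⟨h, h'⟩ hs⟩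
  choose r hr hrW using key
  let S : Polynomial.Sequence F := ⟨r, hr⟩
  -- `e` enumerates the degrees `0, 2, 3, …, 2(n - k)`.
  let e : Fin (2 * n - 2 * k) → ℕ := fun i => if (i : ℕ) = 0 then 0 else i + 1
  have he : Function.Injective e := by
    intro i i' h
    simp only [e] at h
    apply Fin.ext
    split_ifs at h <;> omega
  have hele : ∀ i, e i ≤ 2 * (n - k) ∧ e i ≠ 1 := by
    intro i
    have := i.2
    simp only [e]
    split_ifs <;> omega
  have hli : LinearIndependent F (r ∘ e) := S.linearIndependent.comp e he
  have hspan : Submodule.span F (Set.range (r ∘ e)) ≤ degreeLT F n := by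
    rw [Submodule.span_le]
    rintro _ ⟨i, rfl⟩
    rw [SetLike.mem_coe, mem_degreeLT, Function.comp_apply, hr]
    have := (hele i).1
    exact_mod_cast (by omega : e i < n)
  have hinj : Set.InjOn E (Submodule.span F (Set.range (r ∘ e))) := by
    intro p hp q hq hpq
    have hp' := mem_degreeLT.1 (hspan hp)
    have hq' := mem_degreeLT.1 (hspan hq)
    refine eq_of_degrees_lt_of_eval_index_eq (s := Finset.univ) (v := α) hα.injOn
      (by simpa using hp') (by simpa using hq') fun j _ => ?_
    have := congrFun hpq j
    rw [hE, hE] at this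
    exact mul_left_cancel₀ (pow_ne_zero 2 (uu_ne_zero hα j)) this
  have hliE := hli.map_injOn E hinj
  have hliW : LinearIndependent F
      (fun i => (⟨E (r (e i)), hrW _ (hele i).1 (hele i).2⟩ : W)) :=
    LinearIndependent.of_comp W.subtype hliE
  simpa using hliW.fintype_card_le_finrank
end

section
/- Let α_1, …, α_n ∈ F_q be pairwise distinct, let k be an integer with n ≥ k > n/2, and set u_i = ∏_{j≠i} (α_i − α_j)^{−1}. Then GRS_k(α, 1)⊥ ⋆ GRS_k(α, 1)⊥ = GRS_{2n−2k−1}(α, u²), where u² = (u_1², …, u_n²) and 1 denotes the all-ones vector. -/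
/-!
The dual of `GRS_k(α, 1)` is `GRS_{n-k}(α, u)`, because the functional
`h ↦ ∑ u_j h(α_j)` reads off the coefficient of `X^(n-1)` on polynomials of degree less than `n`
(Lagrange interpolation). It therefore kills products `f g` with `deg f < n - k`, `deg g < k`;
conversely, if `u_j f(α_j)` is dual and `deg f ≥ n - k`, pairing with a suitable power of `X`
exposes the leading coefficient of `f`, a contradiction.

The Schur square of `GRS_m(α, u)` is `GRS_{2m-1}(α, u²)`: products of polynomials of degree less
than `m` have degree less than `2m - 1`, and each `X^i` with `i < 2m - 1` splits as `X^a X^b` with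
`a, b < m`.
-/

open Finset Matrix

/-- The generalized Reed–Solomon code `GRS_m(β, w)`. -/
noncomputable def GRScode {F : Type*} [Field F] {n : ℕ} (m : ℕ) (β w : Fin n → F) :
    Submodule F (Fin n → F) :=
  Submodule.span F
    {x | ∃ f : Polynomial F, f.degree < (m : ℕ) ∧ x = fun j => w j * f.eval (β j)}

/-- The evaluation vectors already form a subspace, so the span in `GRScode` adds nothing. -/
theorem mem_GRScode {F : Type*} [Field F] {n m : ℕ} {β w x : Fin n → F} :
    x ∈ GRScode m β w ↔
      ∃ f : Polynomial F, f.degree < (m : ℕ) ∧ x = fun j => w j * f.eval (β j) := by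
  refine ⟨fun hx => ?_, fun hx => Submodule.subset_span hx⟩
  unfold GRScode at hx
  induction hx using Submodule.span_induction with
  | mem x hx => exact hx
  | zero => exact ⟨0, by simp, by ext; simp⟩
  | add x y _ _ hx hy =>
    obtain ⟨f, hf, rfl⟩ := hx
    obtain ⟨g, hg, rfl⟩ := hy
    refine ⟨f + g, (Polynomial.degree_add_le f g).trans_lt (max_lt hf hg), ?_⟩
    ext j
    simp [mul_add]
  | smul a x _ hx =>
    obtain ⟨f, hf, rfl⟩ := hx
    refine ⟨a • f, (Polynomial.degree_smul_le a f).trans_lt hf, ?_⟩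
    ext j
    simp [mul_left_comm]

theorem degree_mul_lt_add_sub_one {F : Type*} [Field F] {a b : ℕ} {f g : Polynomial F}
    (hf : f.degree < (a : ℕ)) (hg : g.degree < (b : ℕ)) :
    (f * g).degree < ((a + b - 1 : ℕ) : WithBot ℕ) := by
  by_cases hf0 : f = 0
  · simp [hf0]
  by_cases hg0 : g = 0
  · simp [hg0]
  have h1 := (Polynomial.natDegree_lt_iff_degree_lt hf0).2 hf
  have h2 := (Polynomial.natDegree_lt_iff_degree_lt hg0).2 hg
  rw [← Polynomial.natDegree_lt_iff_degree_lt (mul_ne_zero hf0 hg0),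
    Polynomial.natDegree_mul hf0 hg0]
  omega

theorem sum_uu_mul_eval {F : Type*} [Field F] {n : ℕ} {α : Fin n → F}
    (hα : Function.Injective α) {h : Polynomial F} (hh : h.degree < (n : ℕ)) :
    ∑ j, uu α j * h.eval (α j) = h.coeff (n - 1) := by
  have := Lagrange.coeff_eq_sum (s := Finset.univ) (v := α) hα.injOn (P := h) (by simpa using hh)
  rw [Finset.card_univ, Fintype.card_fin] at this
  rw [this]
  refine Finset.sum_congr rfl fun j _ => ?_
  rw [uu, Finset.prod_inv_distrib, div_eq_mul_inv, mul_comm]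

theorem dualCode_GRScode {F : Type*} [Field F] {n : ℕ} {α : Fin n → F}
    (hα : Function.Injective α) {k : ℕ} (hkn : k ≤ n) :
    dualCode (GRScode k α 1) = GRScode (n - k) α (uu α) := by
  ext x
  rw [mem_GRScode]
  constructor
  · intro hx
    have hu : ∀ j, uu α j ≠ 0 := fun j =>
      Lagrange.nodalWeight_ne_zero (s := Finset.univ) (v := α) hα.injOn (Finset.mem_univ j)
    obtain ⟨f, hf, hfx⟩ : ∃ f : Polynomial F, f.degree < (n : ℕ) ∧
        x = fun j => uu α j * f.eval (α j) := by
      refine ⟨Lagrange.interpolate Finset.univ α fun j => (uu α j)⁻¹ * x j, ?_, ?_⟩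
      · simpa using Lagrange.degree_interpolate_lt (s := Finset.univ) (v := α)
          (fun j => (uu α j)⁻¹ * x j) hα.injOn
      · ext j
        rw [Lagrange.eval_interpolate_at_node _ hα.injOn (Finset.mem_univ j),
          mul_inv_cancel_left₀ (hu j)]
    refine ⟨f, ?_, hfx⟩
    by_contra hdeg
    have hf0 : f ≠ 0 := by
      rintro rfl
      simp at hdeg
    have hlt := (Polynomial.natDegree_lt_iff_degree_lt hf0).2 hf
    rw [← Polynomial.natDegree_lt_iff_degree_lt hf0] at hdeg
    -- The shift `n - 1 - deg f` moves the leading coefficient of `f` to degree `n - 1`.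
    have hX : (fun j => (1 : Fin n → F) j *
        (Polynomial.X ^ (n - 1 - f.natDegree) : Polynomial F).eval (α j)) ∈ GRScode k α 1 := by
      refine mem_GRScode.2 ⟨_, ?_, rfl⟩
      rw [Polynomial.degree_X_pow]
      exact_mod_cast (by omega : n - 1 - f.natDegree < k)
    have h0 := hx _ hX
    have hd : (f * Polynomial.X ^ (n - 1 - f.natDegree)).degree < (n : WithBot ℕ) := by
      rw [← Polynomial.natDegree_lt_iff_degree_lt (mul_ne_zero hf0 (by simp)),
        Polynomial.natDegree_mul_X_pow _ hf0]
      omega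
    have h1 := sum_uu_mul_eval hα hd
    have h2 : (f * Polynomial.X ^ (n - 1 - f.natDegree)).coeff (n - 1) = f.leadingCoeff := by
      conv_lhs => rw [show n - 1 = f.natDegree + (n - 1 - f.natDegree) by omega]
      rw [Nat.add_sub_cancel_left, Polynomial.coeff_mul_X_pow]
      rfl
    apply hf0
    rw [← Polynomial.leadingCoeff_eq_zero, ← h2, ← h1, ← h0]
    refine Finset.sum_congr rfl fun j _ => ?_
    simp only [hfx, Pi.one_apply, Polynomial.eval_mul]
    ring
  · rintro ⟨f, hf, rfl⟩ c hc
    obtain ⟨g, hg, rfl⟩ := mem_GRScode.1 hc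
    have hd := degree_mul_lt_add_sub_one hf hg
    rw [Nat.sub_add_cancel hkn] at hd
    have h1 := sum_uu_mul_eval hα (hd.trans_le (by exact_mod_cast Nat.sub_le n 1))
    rw [Polynomial.coeff_eq_zero_of_degree_lt hd] at h1
    rw [← h1]
    refine Finset.sum_congr rfl fun j _ => ?_
    simp only [Pi.one_apply, Polynomial.eval_mul]
    ring

theorem schurMul_GRScode_self {F : Type*} [Field F] {n : ℕ} (m : ℕ) (α w : Fin n → F) :
    schurMul (GRScode m α w) (GRScode m α w) = GRScode (2 * m - 1) α (fun i => w i ^ 2) := by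
  apply le_antisymm
  · refine Submodule.span_le.2 ?_
    rintro _ ⟨c, hc, d, hd, rfl⟩
    obtain ⟨f, hf, rfl⟩ := mem_GRScode.1 hc
    obtain ⟨g, hg, rfl⟩ := mem_GRScode.1 hd
    refine mem_GRScode.2 ⟨f * g, ?_, ?_⟩
    · rw [two_mul]
      exact degree_mul_lt_add_sub_one hf hg
    · ext j
      rw [Polynomial.eval_mul]
      ring
  · refine Submodule.span_le.2 ?_
    rintro _ ⟨f, hf, rfl⟩
    by_cases hf0 : f = 0
    · subst hf0
      convert! (schurMul (GRScode m α w) (GRScode m α w)).zero_mem using 1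
      ext j
      simp
    have hlt := (Polynomial.natDegree_lt_iff_degree_lt hf0).2 hf
    have hsum : (fun j => w j ^ 2 * f.eval (α j)) =
        ∑ i ∈ Finset.range (2 * m - 1), f.coeff i • fun j => w j ^ 2 * α j ^ i := by
      ext j
      simp only [Polynomial.eval_eq_sum_range' hlt, Finset.sum_apply, Pi.smul_apply, smul_eq_mul,
        Finset.mul_sum]
      exact Finset.sum_congr rfl fun i _ => by ring
    have hX : ∀ a < m, (fun j => w j * α j ^ a) ∈ GRScode m α w := fun a ha =>
      mem_GRScode.2 ⟨Polynomial.X ^ a, by rw [Polynomial.degree_X_pow]; exact_mod_cast ha,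
        by simp⟩
    change (fun j => w j ^ 2 * f.eval (α j)) ∈ schurMul (GRScode m α w) (GRScode m α w)
    rw [hsum]
    refine Submodule.sum_mem _ fun i hi => Submodule.smul_mem _ _ (Submodule.subset_span ?_)
    have hi := Finset.mem_range.1 hi
    -- Split `i = i / 2 + (i - i / 2)`; both parts are below `m` since `i ≤ 2 * m - 2`.
    refine ⟨_, hX (i / 2) (by omega), _, hX (i - i / 2) (by omega), ?_⟩
    ext j
    conv_lhs => rw [show i = i / 2 + (i - i / 2) by omega, pow_add]
    ring

theorem stmt15 {F : Type*} [Field F] {n : ℕ}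
    (α : Fin n → F) (hα : Function.Injective α)
    (k : ℕ) (hkn : k ≤ n) (hk : 2 * k > n) :
    schurMul (dualCode (GRScode k α 1)) (dualCode (GRScode k α 1))
      = GRScode (2 * n - 2 * k - 1) α (fun i => uu α i ^ 2) := by
  rw [dualCode_GRScode hα hkn, schurMul_GRScode_self, Nat.mul_sub]
end
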